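/- arXiv:2111.05945 — 3 statements merged into one kernel-verified Lean document; each statement's English description precedes it below -/
import Mathlib

section
/- Let 0 < γ < 1 and c > 0 be real numbers, and let h : [0, ∞) → ℝ be continuously differentiable with h(t) > 0 and h'(t) ≤ −c · h(t)^{2/(1+γ)} for all t ≥ 0. Then ∫_0^∞ √(−h'(t)) dt < ∞. -/
open MeasureTheory

/-!
Since `√(-h') = -h' / √(-h') ≤ -h' / √(c h ^ r)`, the function `√(-h')` is dominated by `-(ψ ∘ h)'`
for any `ψ` with `ψ' x = 1 / √(c x ^ r)`. For `r < 2` one may take the nonnegative function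
`ψ x = x ^ (1 - r / 2) / ((1 - r / 2) √c)`, and the integral of `√(-h')` is at most the total
decrease of `ψ ∘ h`, hence at most `ψ (h a)`. This Łojasiewicz length estimate replaces the dyadic
Cauchy–Schwarz argument of the paper.
-/

open Filter Set
open scoped Topology

lemma exists_tendsto_atTop_of_antitoneOn_Ici {α β : Type*} [Preorder α] [IsDirectedOrder α]
    [ConditionallyCompleteLinearOrder β] [TopologicalSpace β] [OrderTopology β] {f : α → β} {a : α}
    (hf : AntitoneOn f (Ici a)) (hbdd : BddBelow (f '' Ici a)) :
    ∃ l, Tendsto f atTop (𝓝 l) := by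
  rw [image_eq_range] at hbdd
  have hanti : Antitone fun t : Ici a => f t := fun s t hst => hf s.2 t.2 hst
  exact ⟨_, tendsto_comp_val_Ici_atTop.1 (tendsto_atTop_ciInf hanti hbdd)⟩

lemma lintegral_Ici_neg_deriv_le {f f' : ℝ → ℝ} {a B : ℝ}
    (hderiv : ∀ t, a ≤ t → HasDerivWithinAt f (f' t) (Ici a) t)
    (hf' : ∀ t, a ≤ t → f' t ≤ 0) (hB : ∀ t, a ≤ t → B ≤ f t) :
    ∫⁻ t in Ici a, ENNReal.ofReal (-f' t) ≤ ENNReal.ofReal (f a - B) := by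
  have hcont : ContinuousOn f (Ici a) := fun t ht => (hderiv t ht).continuousWithinAt
  have hderiv_Ioi : ∀ t ∈ Ioi a, HasDerivAt f (f' t) t := fun t ht =>
    (hderiv t ht.le).hasDerivAt (Ici_mem_nhds ht)
  have hf'_Ioi : ∀ t ∈ Ioi a, f' t ≤ 0 := fun t ht => hf' t ht.le
  have hanti : AntitoneOn f (Ici a) := by
    refine antitoneOn_of_hasDerivWithinAt_nonpos (f' := f') (convex_Ici a) hcont ?_ ?_ <;>
      rw [interior_Ici]
    · exact fun t ht => (hderiv_Ioi t ht).hasDerivWithinAt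
    · exact hf'_Ioi
  obtain ⟨l, hl⟩ := exists_tendsto_atTop_of_antitoneOn_Ici hanti ⟨B, forall_mem_image.2 hB⟩
  have hBl : B ≤ l := ge_of_tendsto hl ((eventually_ge_atTop a).mono hB)
  have hint : IntegrableOn f' (Ioi a) :=
    integrableOn_Ioi_deriv_of_nonpos (hcont a self_mem_Ici) hderiv_Ioi hf'_Ioi hl
  have hnonneg : 0 ≤ᵐ[volume.restrict (Ioi a)] fun t => -f' t :=
    ae_restrict_of_forall_mem measurableSet_Ioi fun t ht => neg_nonneg.2 (hf'_Ioi t ht)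
  calc ∫⁻ t in Ici a, ENNReal.ofReal (-f' t)
      = ∫⁻ t in Ioi a, ENNReal.ofReal (-f' t) := setLIntegral_congr Ioi_ae_eq_Ici.symm
    _ = ENNReal.ofReal (∫ t in Ioi a, -f' t) :=
        (ofReal_integral_eq_lintegral_ofReal hint.neg hnonneg).symm
    _ = ENNReal.ofReal (f a - l) := by
        rw [integral_neg, integral_Ioi_of_hasDerivAt_of_nonpos (hcont a self_mem_Ici) hderiv_Ioi
          hf'_Ioi hl, neg_sub]
    _ ≤ ENNReal.ofReal (f a - B) := by gcongr

lemma sqrt_le_div_sqrt_of_le {x y : ℝ} (hx : 0 < x) (hxy : x ≤ y) : √y ≤ y / √x := by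
  calc √y = y / √y := Real.div_sqrt.symm
    _ ≤ y / √x := by gcongr; exact hx.le.trans hxy

/- `ψ` plays the role of the desingularizing function in the Łojasiewicz gradient inequality. -/
lemma lintegral_sqrt_neg_deriv_le {h h' θ ψ : ℝ → ℝ} {s : Set ℝ} {a B : ℝ}
    (hderiv : ∀ t, a ≤ t → HasDerivWithinAt h (h' t) (Ici a) t) (hs : MapsTo h (Ici a) s)
    (hθ : ∀ x ∈ s, 0 < θ x) (hψ : ∀ x ∈ s, HasDerivWithinAt ψ (1 / √(θ x)) s x)
    (hB : ∀ x ∈ s, B ≤ ψ x) (hineq : ∀ t, a ≤ t → h' t ≤ -θ (h t)) :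
    ∫⁻ t in Ici a, ENNReal.ofReal √(-h' t) ≤ ENNReal.ofReal (ψ (h a) - B) := by
  have hcomp : ∀ t, a ≤ t → HasDerivWithinAt (ψ ∘ h) (1 / √(θ (h t)) * h' t) (Ici a) t :=
    fun t ht => (hψ _ (hs ht)).comp t (hderiv t ht) hs
  have hsqrt : ∀ t, a ≤ t → √(-h' t) ≤ -(1 / √(θ (h t)) * h' t) := fun t ht =>
    calc √(-h' t) ≤ -h' t / √(θ (h t)) :=
          sqrt_le_div_sqrt_of_le (hθ _ (hs ht)) (le_neg_of_le_neg (hineq t ht))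
      _ = -(1 / √(θ (h t)) * h' t) := by ring
  calc ∫⁻ t in Ici a, ENNReal.ofReal √(-h' t)
      ≤ ∫⁻ t in Ici a, ENNReal.ofReal (-(1 / √(θ (h t)) * h' t)) :=
        setLIntegral_mono' measurableSet_Ici fun t ht => ENNReal.ofReal_le_ofReal (hsqrt t ht)
    _ ≤ ENNReal.ofReal (ψ (h a) - B) :=
        lintegral_Ici_neg_deriv_le hcomp
          (fun t ht => neg_nonneg.1 ((Real.sqrt_nonneg _).trans (hsqrt t ht)))
          fun t ht => hB _ (hs ht)

lemma hasDerivAt_rpow_div_mul_sqrt {c r x : ℝ} (hc : 0 ≤ c) (hr : r ≠ 2) (hx : 0 < x) :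
    HasDerivAt (fun y => y ^ (1 - r / 2) / ((1 - r / 2) * √c)) (1 / √(c * x ^ r)) x := by
  have hp : 1 - r / 2 ≠ 0 := fun hp => hr (by linarith)
  have hsqrt : √(c * x ^ r) = √c * x ^ (r / 2) := by
    rw [Real.sqrt_mul hc, Real.sqrt_eq_rpow (x ^ r), ← Real.rpow_mul hx.le, mul_one_div]
  refine ((Real.hasDerivAt_rpow_const (Or.inl hx.ne')).div_const _).congr_deriv ?_
  calc (1 - r / 2) * x ^ (1 - r / 2 - 1) / ((1 - r / 2) * √c)
      = x ^ (-(r / 2)) / √c := by rw [mul_div_mul_left _ _ hp]; congr 2; ring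
    _ = 1 / √(c * x ^ r) := by rw [hsqrt, Real.rpow_neg hx.le, inv_eq_one_div, div_div, mul_comm]

theorem stmt3_general {c r a : ℝ} (hc : 0 < c) (hr : r < 2) {h h' : ℝ → ℝ}
    (hderiv : ∀ t, a ≤ t → HasDerivWithinAt h (h' t) (Ici a) t)
    (hpos : ∀ t, a ≤ t → 0 < h t) (hineq : ∀ t, a ≤ t → h' t ≤ -c * h t ^ r) :
    ∫⁻ t in Ici a, ENNReal.ofReal √(-h' t) ≤
      ENNReal.ofReal (h a ^ (1 - r / 2) / ((1 - r / 2) * √c)) := by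
  have hp : 0 < 1 - r / 2 := by linarith
  have hψ_nonneg : ∀ x ∈ Ioi (0 : ℝ), 0 ≤ x ^ (1 - r / 2) / ((1 - r / 2) * √c) :=
    fun x (hx : 0 < x) => by positivity
  have hlength := lintegral_sqrt_neg_deriv_le (θ := fun x => c * x ^ r) hderiv hpos
    (fun x hx => mul_pos hc (Real.rpow_pos_of_pos hx r))
    (fun x hx => (hasDerivAt_rpow_div_mul_sqrt hc.le hr.ne hx).hasDerivWithinAt)
    hψ_nonneg (fun t ht => (hineq t ht).trans_eq (neg_mul _ _))
  rwa [sub_zero] at hlength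

/-- Abstract form of Proposition 3.5: if `h > 0` on `[0,∞)` is continuously
differentiable with `h' ≤ -c · h^(2/(1+γ))`, then `∫_0^∞ √(-h') < ∞`. -/
theorem stmt3 (γ c : ℝ) (hγ0 : 0 < γ) (hγ1 : γ < 1) (hc : 0 < c)
    (h h' : ℝ → ℝ)
    (hderiv : ∀ t : ℝ, 0 ≤ t → HasDerivWithinAt h (h' t) (Set.Ici 0) t)
    (hcont : ContinuousOn h' (Set.Ici 0))
    (hpos : ∀ t : ℝ, 0 ≤ t → 0 < h t)
    (hineq : ∀ t : ℝ, 0 ≤ t → h' t ≤ -c * h t ^ (2 / (1 + γ))) :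
    ∫⁻ t in Set.Ici (0 : ℝ), ENNReal.ofReal (Real.sqrt (-h' t)) < ⊤ := by
  have hr : 2 / (1 + γ) < 2 := div_lt_self two_pos (lt_add_of_pos_right 1 hγ0)
  exact (stmt3_general hc hr hderiv hpos hineq).trans_lt ENNReal.ofReal_lt_top
end

section
/- Let (X, d) be a proper metric space (every closed ball is compact), let w : X → [0, ∞) be continuous, let x ∈ X, and let r > 0 and θ > 0 be real numbers. Then there exist r₀ ∈ [0, r) and a point x₀ in the closed ball B̄(x, r₀) such that: (i) w(x₀) = max_{B̄(x, r₀)} w; (ii) (r − s)^θ · max_{B̄(x, s)} w ≤ (r − r₀)^θ · w(x₀) for every s ∈ [0, r); and (iii) sup_{B̄(x₀, (r−r₀)/2)} w ≤ 2^θ · w(x₀). -/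
/-!
Maximize `(r - dist y x) ^ θ * w y` over the ball of radius `r` about `x`. The weight vanishes on
the boundary sphere, so some maximizer `z` lies in the interior; take `r₀ = dist z x`. The weight
is at least `(r - s) ^ θ` on the ball of radius `s`. This gives (ii), and then (i) with `s = r₀`
and (iii) with `s = (r + r₀) / 2`, after dividing by the positive weight of `z`.
-/

open Metric Filter Topology

section Compact

variable {X : Type*} [TopologicalSpace X] {K : Set X} {f w : X → ℝ}

theorem upperSemicontinuousOn_mul_of_continuousOn (hf : ContinuousOn f K)
    (hf_nonneg : ∀ y ∈ K, 0 ≤ f y) (hw : UpperSemicontinuousOn w K) :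
    UpperSemicontinuousOn (fun y => f y * w y) K := by
  intro y hy c hc
  obtain ⟨b, hcb, hwb⟩ : ∃ b, f y * b < c ∧ w y < b := by
    have hlim : Tendsto (f y * ·) (𝓝[>] w y) (𝓝 (f y * w y)) :=
      ((continuous_const_mul (f y)).tendsto (w y)).mono_left nhdsWithin_le_nhds
    exact ((hlim.eventually_lt_const hc).and self_mem_nhdsWithin).exists
  have hfb : ∀ᶠ v in 𝓝[K] y, f v * b < c :=
    ((hf y hy).mul_const b).eventually_lt_const hcb
  filter_upwards [hw y hy b hwb, hfb, self_mem_nhdsWithin] with v hwv hfv hv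
  exact (mul_le_mul_of_nonneg_left hwv.le (hf_nonneg v hv)).trans_lt hfv

theorem exists_pos_isMaxOn_mul (hK : IsCompact K) (hf : ContinuousOn f K)
    (hf_nonneg : ∀ y ∈ K, 0 ≤ f y) (hf_pos : ∃ y ∈ K, 0 < f y)
    (hw : UpperSemicontinuousOn w K) (hw_nonneg : ∀ y ∈ K, 0 ≤ w y) :
    ∃ z ∈ K, 0 < f z ∧ IsMaxOn (fun y => f y * w y) K z := by
  obtain ⟨x, hx, hfx⟩ := hf_pos
  obtain ⟨z, hz, hmax⟩ :=
    (upperSemicontinuousOn_mul_of_continuousOn hf hf_nonneg hw).exists_isMaxOn ⟨x, hx⟩ hK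
  rcases (hf_nonneg z hz).eq_or_lt with hfz | hfz
  -- If `f z = 0`, the maximum is `0`, and every point of `K` attains it.
  · refine ⟨x, hx, hfx, fun y hy => ?_⟩
    calc f y * w y ≤ f z * w z := hmax hy
      _ = 0 := by rw [← hfz, zero_mul]
      _ ≤ f x * w x := mul_nonneg hfx.le (hw_nonneg x hx)
  · exact ⟨z, hz, hfz, hmax⟩

end Compact

section WeightedMaximum

variable {X : Type*} [PseudoMetricSpace X] {w : X → ℝ} {x y z : X} {r s θ : ℝ}

theorem exists_dist_lt_isMaxOn_rpow_mul (hr : 0 < r) (hθ : 0 < θ)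
    (hK : IsCompact (closedBall x r)) (hw : UpperSemicontinuousOn w (closedBall x r))
    (hw_nonneg : ∀ y ∈ closedBall x r, 0 ≤ w y) :
    ∃ z, dist z x < r ∧ IsMaxOn (fun y => (r - dist y x) ^ θ * w y) (closedBall x r) z := by
  have hweight : Continuous fun y => (r - dist y x) ^ θ :=
    (continuous_const.sub (continuous_id.dist continuous_const)).rpow_const fun _ => .inr hθ.le
  have hgap : ∀ y ∈ closedBall x r, 0 ≤ r - dist y x := fun _ hy => sub_nonneg.2 hy
  obtain ⟨z, hz, hpos, hmax⟩ := exists_pos_isMaxOn_mul hK hweight.continuousOn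
    (fun y hy => Real.rpow_nonneg (hgap y hy) θ)
    ⟨x, mem_closedBall_self hr.le, Real.rpow_pos_of_pos (by simpa only [dist_self, sub_zero]) θ⟩
    hw hw_nonneg
  have hgap_ne : r - dist z x ≠ 0 := fun h => by
    rw [h, Real.zero_rpow hθ.ne'] at hpos
    exact hpos.false
  exact ⟨z, sub_pos.1 ((hgap z hz).lt_of_ne' hgap_ne), hmax⟩

theorem rpow_mul_le_of_isMaxOn (hθ : 0 ≤ θ) (hw_nonneg : ∀ y ∈ closedBall x r, 0 ≤ w y)
    (hmax : IsMaxOn (fun y => (r - dist y x) ^ θ * w y) (closedBall x r) z)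
    (hs : s ≤ r) (hy : y ∈ closedBall x s) :
    (r - s) ^ θ * w y ≤ (r - dist z x) ^ θ * w z := by
  have hyr : y ∈ closedBall x r := closedBall_subset_closedBall hs hy
  calc (r - s) ^ θ * w y ≤ (r - dist y x) ^ θ * w y :=
        mul_le_mul_of_nonneg_right
          (Real.rpow_le_rpow (sub_nonneg.2 hs) (sub_le_sub_left hy r) hθ) (hw_nonneg y hyr)
    _ ≤ (r - dist z x) ^ θ * w z := hmax hyr

theorem le_of_isMaxOn_rpow_mul (hθ : 0 ≤ θ) (hw_nonneg : ∀ y ∈ closedBall x r, 0 ≤ w y)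
    (hmax : IsMaxOn (fun y => (r - dist y x) ^ θ * w y) (closedBall x r) z)
    (hz : dist z x < r) (hy : y ∈ closedBall x (dist z x)) : w y ≤ w z :=
  le_of_mul_le_mul_left (rpow_mul_le_of_isMaxOn hθ hw_nonneg hmax hz.le hy)
    (Real.rpow_pos_of_pos (sub_pos.2 hz) θ)

theorem rpow_mul_sSup_image_closedBall_le_of_isMaxOn (hθ : 0 ≤ θ)
    (hw_nonneg : ∀ y ∈ closedBall x r, 0 ≤ w y)
    (hmax : IsMaxOn (fun y => (r - dist y x) ^ θ * w y) (closedBall x r) z)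
    (hs_nonneg : 0 ≤ s) (hs : s < r) :
    (r - s) ^ θ * sSup (w '' closedBall x s) ≤ (r - dist z x) ^ θ * w z := by
  have hpos : 0 < (r - s) ^ θ := Real.rpow_pos_of_pos (sub_pos.2 hs) θ
  rw [← le_div_iff₀' hpos]
  refine csSup_le ((nonempty_closedBall.2 hs_nonneg).image w) ?_
  rintro _ ⟨y, hy, rfl⟩
  exact (le_div_iff₀' hpos).2 (rpow_mul_le_of_isMaxOn hθ hw_nonneg hmax hs.le hy)

theorem le_rpow_mul_of_isMaxOn (hθ : 0 ≤ θ) (hw_nonneg : ∀ y ∈ closedBall x r, 0 ≤ w y)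
    (hmax : IsMaxOn (fun y => (r - dist y x) ^ θ * w y) (closedBall x r) z)
    (hz : dist z x < r) {c : ℝ} (hc : 0 < c)
    (hy : y ∈ closedBall z ((1 - c⁻¹) * (r - dist z x))) : w y ≤ c ^ θ * w z := by
  have hgap : 0 < r - dist z x := sub_pos.2 hz
  have hs : r - (r - dist z x) / c ≤ r := sub_le_self r (div_pos hgap hc).le
  have hys : y ∈ closedBall x (r - (r - dist z x) / c) :=
    calc dist y x ≤ dist y z + dist z x := dist_triangle y z x
      _ ≤ (1 - c⁻¹) * (r - dist z x) + dist z x := by gcongr; exact hy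
      _ = r - (r - dist z x) / c := by ring
  have hle := rpow_mul_le_of_isMaxOn hθ hw_nonneg hmax hs hys
  rw [sub_sub_cancel, Real.div_rpow hgap.le hc.le, div_mul_eq_mul_div,
    div_le_iff₀' (Real.rpow_pos_of_pos hc θ), mul_left_comm] at hle
  exact le_of_mul_le_mul_left hle (Real.rpow_pos_of_pos hgap θ)

end WeightedMaximum

theorem stmt9_general {X : Type*} [PseudoMetricSpace X] {w : X → ℝ} {x : X} {r θ : ℝ}
    (hr : 0 < r) (hθ : 0 < θ) (hK : IsCompact (closedBall x r))
    (hw : UpperSemicontinuousOn w (closedBall x r))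
    (hw_nonneg : ∀ y ∈ closedBall x r, 0 ≤ w y) :
    ∃ r₀ : ℝ, 0 ≤ r₀ ∧ r₀ < r ∧ ∃ x₀ ∈ closedBall x r₀,
      (∀ y ∈ closedBall x r₀, w y ≤ w x₀) ∧
      (∀ s : ℝ, 0 ≤ s → s < r →
        (r - s) ^ θ * sSup (w '' closedBall x s) ≤ (r - r₀) ^ θ * w x₀) ∧
      (∀ y ∈ closedBall x₀ ((r - r₀) / 2), w y ≤ 2 ^ θ * w x₀) := by
  obtain ⟨z, hz, hmax⟩ := exists_dist_lt_isMaxOn_rpow_mul hr hθ hK hw hw_nonneg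
  have hhalf : (r - dist z x) / 2 = (1 - 2⁻¹) * (r - dist z x) := by ring
  refine ⟨dist z x, dist_nonneg, hz, z, mem_closedBall.2 le_rfl, fun y hy => ?_,
    fun s hs_nonneg hs => ?_, fun y hy => ?_⟩
  · exact le_of_isMaxOn_rpow_mul hθ.le hw_nonneg hmax hz hy
  · exact rpow_mul_sSup_image_closedBall_le_of_isMaxOn hθ.le hw_nonneg hmax hs_nonneg hs
  · exact le_rpow_mul_of_isMaxOn hθ.le hw_nonneg hmax hz two_pos (hhalf ▸ hy)

/-- Point-picking argument from the proof of Lemma 3.8: on a proper metric space,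
for continuous `w ≥ 0`, `x ∈ X`, `r > 0`, `θ > 0`, there are `r₀ ∈ [0, r)` and
`x₀ ∈ B̄(x, r₀)` with (i) `w x₀ = max_{B̄(x,r₀)} w`,
(ii) `(r - s)^θ · max_{B̄(x,s)} w ≤ (r - r₀)^θ · w x₀` for all `s ∈ [0, r)`, and
(iii) `sup_{B̄(x₀, (r-r₀)/2)} w ≤ 2^θ · w x₀`. -/
theorem stmt9 {X : Type*} [MetricSpace X] [ProperSpace X]
    (w : X → ℝ) (hw_cont : Continuous w) (hw_nonneg : ∀ y : X, 0 ≤ w y)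
    (x : X) (r θ : ℝ) (hr : 0 < r) (hθ : 0 < θ) :
    ∃ r₀ : ℝ, 0 ≤ r₀ ∧ r₀ < r ∧ ∃ x₀ ∈ Metric.closedBall x r₀,
      (∀ y ∈ Metric.closedBall x r₀, w y ≤ w x₀) ∧
      (∀ s : ℝ, 0 ≤ s → s < r →
        (r - s) ^ θ * sSup (w '' Metric.closedBall x s) ≤ (r - r₀) ^ θ * w x₀) ∧
      (∀ y ∈ Metric.closedBall x₀ ((r - r₀) / 2), w y ≤ 2 ^ θ * w x₀) :=
  stmt9_general hr hθ (isCompact_closedBall x r)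
    (hw_cont.upperSemicontinuous.upperSemicontinuousOn _) fun y _ => hw_nonneg y
end

section
/- Let C > 0 and δ > 0 be real numbers, and let F : [0, ∞) → [0, ∞) be continuously differentiable with ∫_0^∞ F(t) dt < ∞ and F'(t) ≤ C·(F(t)^{1+δ} + F(t)) for all t ≥ 0. Then F(t) → 0 as t → ∞. -/
open MeasureTheory

/-!
The derivative of `F` is bounded above as long as `F` takes values in `[ε / 2, ε]`, so climbing from
`ε / 2` to `ε` takes at least some fixed time. But `F` is integrable, so every shorter window of a
given length that lies far enough to the right contains a point where `F < ε / 2`. Hence `F`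
eventually never has the time to climb to `ε`.
-/

open Set Filter Topology

theorem tendsto_intervalIntegral_zero_of_integrableOn_Ioi {ι E : Type*} [NormedAddCommGroup E]
    [NormedSpace ℝ E] {μ : Measure ℝ} {l : Filter ι} [l.IsCountablyGenerated] {f : ℝ → E} {a : ℝ}
    {u v : ι → ℝ} (hf : IntegrableOn f (Ioi a) μ) (hu : Tendsto u l atTop)
    (hv : Tendsto v l atTop) :
    Tendsto (fun i => ∫ x in u i..v i, f x ∂μ) l (𝓝 0) := by
  have hint {b : ℝ} (hb : a ≤ b) : IntervalIntegrable f μ a b :=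
    (intervalIntegrable_iff_integrableOn_Ioc_of_le hb).2 (hf.mono_set Ioc_subset_Ioi_self)
  rw [← sub_self (∫ x in Ioi a, f x ∂μ)]
  refine ((intervalIntegral_tendsto_integral_Ioi a hf hv).sub
    (intervalIntegral_tendsto_integral_Ioi a hf hu)).congr' ?_
  filter_upwards [hu.eventually_ge_atTop a, hv.eventually_ge_atTop a] with i hui hvi
  exact intervalIntegral.integral_interval_sub_left (hint hvi) (hint hui)

theorem eventually_exists_mem_Icc_lt_of_integrableOn_Ioi {f : ℝ → ℝ} {a b d : ℝ}
    (hf : IntegrableOn f (Ioi a)) (hb : 0 < b) (hd : 0 < d) :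
    ∀ᶠ t in atTop, ∃ s ∈ Icc (t - d) t, f s < b := by
  have hsub : Tendsto (fun t : ℝ => t - d) atTop atTop :=
    tendsto_atTop_add_const_right _ _ tendsto_id
  have hzero : Tendsto (fun t => ∫ s in (t - d)..t, f s) atTop (𝓝 0) :=
    tendsto_intervalIntegral_zero_of_integrableOn_Ioi hf hsub tendsto_id
  filter_upwards [hzero.eventually_lt_const (mul_pos hd hb), hsub.eventually_ge_atTop a]
    with t hlt hat
  by_contra! hge
  have hdt : t - d ≤ t := sub_le_self t hd.le
  have hft : IntervalIntegrable f volume (t - d) t :=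
    (intervalIntegrable_iff_integrableOn_Ioc_of_le hdt).2
      (hf.mono_set (Ioc_subset_Ioi_self.trans (Ioi_subset_Ioi hat)))
  refine hlt.not_ge ?_
  calc d * b = ∫ _ in (t - d)..t, b := by simp
    _ ≤ ∫ s in (t - d)..t, f s :=
      intervalIntegral.integral_mono_on hdt intervalIntegrable_const hft hge

theorem image_le_add_mul_of_deriv_right_lt_of_mem_Icc {f f' : ℝ → ℝ} {s t b c K : ℝ}
    (hst : s ≤ t) (hf : ContinuousOn f (Icc s t))
    (hf' : ∀ x ∈ Ico s t, HasDerivWithinAt f (f' x) (Ici x) x) (hK : 0 ≤ K)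
    (bound : ∀ x ∈ Ico s t, f x ∈ Icc b c → f' x < K) (hs : f s ≤ b)
    (hc : b + K * (t - s) ≤ c) : f t ≤ b + K * (t - s) := by
  have hB (x : ℝ) : HasDerivAt (fun y => b + K * (y - s)) K x := by
    simpa using (((hasDerivAt_id x).sub_const s).const_mul K).const_add b
  refine image_le_of_deriv_right_lt_deriv_boundary hf hf' (by simpa using hs) hB ?_
    (right_mem_Icc.2 hst)
  intro x hx hfx
  refine bound x hx ⟨?_, ?_⟩
  · rw [hfx]
    exact le_add_of_nonneg_right (mul_nonneg hK (sub_nonneg.2 hx.1))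
  · calc f x = b + K * (x - s) := hfx
      _ ≤ b + K * (t - s) := by gcongr; exact hx.2.le
      _ ≤ c := hc

theorem eventually_lt_of_integrableOn_Ioi_of_deriv_right_lt {f f' : ℝ → ℝ} {a b c K : ℝ}
    (hf : ContinuousOn f (Ici a)) (hf' : ∀ t, a ≤ t → HasDerivWithinAt f (f' t) (Ici t) t)
    (hint : IntegrableOn f (Ioi a)) (hb : 0 < b) (hbc : b < c)
    (bound : ∀ t, a ≤ t → f t ∈ Icc b c → f' t < K) : ∀ᶠ t in atTop, f t < c := by
  wlog hK : 0 < K generalizing K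
  · exact this (fun t ht hft => (bound t ht hft).trans_le (le_max_left K 1))
      (lt_max_of_lt_right one_pos)
  obtain ⟨d, hd, hdc⟩ : ∃ d, 0 < d ∧ b + K * d < c := by
    obtain ⟨d, hd, hKd⟩ := exists_pos_mul_lt (sub_pos.2 hbc) K
    exact ⟨d, hd, lt_sub_iff_add_lt'.1 hKd⟩
  filter_upwards [eventually_exists_mem_Icc_lt_of_integrableOn_Ioi hint hb hd,
    eventually_ge_atTop (a + d)] with t ⟨s, ⟨hds, hst⟩, hfs⟩ hat
  have has : a ≤ s := (le_sub_iff_add_le.2 hat).trans hds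
  have hclimb : b + K * (t - s) < c := by
    refine lt_of_le_of_lt ?_ hdc
    gcongr
    exact sub_le_comm.1 hds
  exact (image_le_add_mul_of_deriv_right_lt_of_mem_Icc hst
    (hf.mono fun x hx => has.trans hx.1) (fun x hx => hf' x (has.trans hx.1)) hK.le
    (fun x hx => bound x (has.trans hx.1)) hfs.le hclimb.le).trans_lt hclimb

theorem stmt10_general {F F' g : ℝ → ℝ} {a : ℝ} (hg : ContinuousOn g (Ioi 0))
    (hF_nonneg : ∀ t, a ≤ t → 0 ≤ F t) (hF : ContinuousOn F (Ici a))
    (hderiv : ∀ t, a ≤ t → HasDerivWithinAt F (F' t) (Ici t) t)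
    (hint : IntegrableOn F (Ioi a)) (hineq : ∀ t, a ≤ t → 0 < F t → F' t ≤ g (F t)) :
    Tendsto F atTop (𝓝 0) := by
  refine tendsto_order.2 ⟨fun y hy => ?_, fun ε hε => ?_⟩
  · filter_upwards [eventually_ge_atTop a] with t ht
    exact hy.trans_le (hF_nonneg t ht)
  · have hpos {x : ℝ} (hx : x ∈ Icc (ε / 2) ε) : 0 < x := (half_pos hε).trans_le hx.1
    obtain ⟨K, hK⟩ := isCompact_Icc.bddAbove_image (hg.mono fun _ => hpos)
    refine eventually_lt_of_integrableOn_Ioi_of_deriv_right_lt hF hderiv hint (half_pos hε)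
      (half_lt_self hε) (K := K + 1) fun t ht hFt => ?_
    calc F' t ≤ g (F t) := hineq t ht (hpos hFt)
      _ ≤ K := hK (mem_image_of_mem g hFt)
      _ < K + 1 := lt_add_one K

/-- Abstract form of Proposition 3.1: if `F ≥ 0` on `[0,∞)` is continuously
differentiable with `∫_0^∞ F < ∞` and `F' ≤ C(F^(1+δ) + F)`, then `F(t) → 0`
as `t → ∞`. -/
theorem stmt10 (C δ : ℝ) (hC : 0 < C) (hδ : 0 < δ)
    (F F' : ℝ → ℝ)
    (hF_nonneg : ∀ t : ℝ, 0 ≤ t → 0 ≤ F t)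
    (hderiv : ∀ t : ℝ, 0 ≤ t → HasDerivWithinAt F (F' t) (Set.Ici 0) t)
    (hcont : ContinuousOn F' (Set.Ici 0))
    (hint : IntegrableOn F (Set.Ici 0))
    (hineq : ∀ t : ℝ, 0 ≤ t → F' t ≤ C * (F t ^ (1 + δ) + F t)) :
    Filter.Tendsto F Filter.atTop (nhds 0) := by
  have hg : ContinuousOn (fun x : ℝ => C * (x ^ (1 + δ) + x)) (Ioi 0) :=
    ((continuousOn_id.rpow_const fun x hx => Or.inl hx.ne').add continuousOn_id).const_mul C
  exact stmt10_general hg hF_nonneg (fun t ht => (hderiv t ht).continuousWithinAt)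
    (fun t ht => (hderiv t ht).mono (Ici_subset_Ici.2 ht))
    (hint.mono_set Ioi_subset_Ici_self) fun t ht _ => hineq t ht
end
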